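/- arXiv:2410.14176 — 3 statements merged into one kernel-verified Lean document; each statement's English description precedes it below -/
import Mathlib

section
/- Let Ω ⊆ ℝ³ be open, μ, λ, μ_c, α, β, γ ∈ ℝ, and u, ω : ℝ³ → ℝ³ differentiable on Ω. Then at every point of Ω the Cosserat energy integrand satisfies ½⟨C₁(grad u − mskw ω), grad u − mskw ω⟩ + ½⟨C₂(grad ω), grad ω⟩ = μ‖sym grad u‖² + (λ/2)(div u)² + μ_c‖½curl u − ω‖² + ((γ+β)/2)‖sym grad ω‖² + ((γ−β)/4)‖curl ω‖² + (α/2)(div ω)², where ‖·‖ is the Frobenius norm on matrices and the Euclidean norm on vectors. -/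
open Matrix

noncomputable section

/-- Vectors in ℝ³. -/
abbrev V3 := Fin 3 → ℝ
/-- 3×3 real matrices. -/
abbrev M3 := Matrix (Fin 3) (Fin 3) ℝ

/-- Euclidean inner product on ℝ³. -/
def dot3 (u v : V3) : ℝ := ∑ i, u i * v i

/-- Frobenius inner product ⟨A,B⟩ = tr(AᵀB). -/
def frobInner (A B : M3) : ℝ := Matrix.trace (Aᵀ * B)

/-- Symmetric part of a matrix. -/
def symPart (A : M3) : M3 := (1/2 : ℝ) • (A + Aᵀ)

/-- Skew-symmetric part of a matrix. -/
def skwPart (A : M3) : M3 := (1/2 : ℝ) • (A - Aᵀ)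

/-- mskw : ℝ³ → ℝ^{3×3}. -/
def mskw (u : V3) : M3 :=
  !![0, -u 2, u 1; u 2, 0, -u 0; -u 1, u 0, 0]

/-- vskw : ℝ^{3×3} → ℝ³. -/
def vskw (A : M3) : V3 :=
  ![(A 2 1 - A 1 2)/2, (A 0 2 - A 2 0)/2, (A 1 0 - A 0 1)/2]

/-- Partial derivative ∂ⱼ f (Fréchet derivative in the j-th coordinate direction). -/
def pd (j : Fin 3) (f : V3 → ℝ) (x : V3) : ℝ := fderiv ℝ f x (Pi.single j 1)

/-- Jacobian matrix (grad v)ᵢⱼ = ∂ⱼ vᵢ of a vector field. -/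
def vgrad (v : V3 → V3) (x : V3) : M3 :=
  Matrix.of fun i j => pd j (fun y => v y i) x

/-- Divergence of a vector field. -/
def vdiv (v : V3 → V3) (x : V3) : ℝ :=
  pd 0 (fun y => v y 0) x + pd 1 (fun y => v y 1) x + pd 2 (fun y => v y 2) x

/-- Curl of a vector field. -/
def vcurl (v : V3 → V3) (x : V3) : V3 :=
  ![pd 1 (fun y => v y 2) x - pd 2 (fun y => v y 1) x,
    pd 2 (fun y => v y 0) x - pd 0 (fun y => v y 2) x,
    pd 0 (fun y => v y 1) x - pd 1 (fun y => v y 0) x]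

/-- Row-wise curl of a matrix field. -/
def mcurl (M : V3 → M3) (x : V3) : M3 :=
  Matrix.of fun i j => vcurl (fun y => M y i) x j

/-- Row-wise divergence of a matrix field. -/
def mdiv (M : V3 → M3) (x : V3) : V3 :=
  fun i => vdiv (fun y => M y i) x

/-- The algebraic operator 𝒮(A) = Aᵀ − (tr A)·I. -/
def Sop (A : M3) : M3 := Aᵀ - (Matrix.trace A) • (1 : M3)

/-- The inverse 𝒮⁻¹(B) = Bᵀ − ½(tr B)·I. -/
def Sinv (B : M3) : M3 := Bᵀ - ((1/2 : ℝ) * Matrix.trace B) • (1 : M3)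

/-- Cosserat material law C₁(ε) = 2μ sym ε + λ(tr ε)I + μ_c skw ε. -/
def C1 (μ lam μc : ℝ) (ε : M3) : M3 :=
  (2*μ) • symPart ε + (lam * Matrix.trace ε) • (1 : M3) + μc • skwPart ε

/-- Elasticity tensor 𝒞(ε) = 2μ sym ε + λ(tr ε)I. -/
def Cel (μ lam : ℝ) (ε : M3) : M3 :=
  (2*μ) • symPart ε + (lam * Matrix.trace ε) • (1 : M3)

/-- Curvature material law C₂(ε) = (γ+β) sym ε + α(tr ε)I + (γ−β) skw ε. -/
def C2mat (α β γ : ℝ) (ε : M3) : M3 :=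
  (γ+β) • symPart ε + (α * Matrix.trace ε) • (1 : M3) + (γ-β) • skwPart ε

/-!
Symmetric and skew-symmetric matrices are Frobenius-orthogonal, so the quadratic form of `C1` splits
into a symmetric, a trace and a skew part; `C2mat` is the same law with other parameters. The skew
part of a matrix has twice the squared norm of its axial vector `vskw`. Subtracting `mskw ω` from
`grad u` changes neither the symmetric part nor the trace, and shifts the axial vector `½ curl u`
by `-ω`.
-/

theorem trace_mul_eq_zero_of_isSymm_of_transpose_eq_neg {n R : Type*} [Fintype n] [CommRing R]
    [IsAddTorsionFree R] {S K : Matrix n n R} (hS : S.IsSymm) (hK : Kᵀ = -K) :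
    trace (S * K) = 0 := by
  rw [← self_eq_neg]
  calc trace (S * K) = trace (Sᵀ * Kᵀ) := (trace_transpose_mul S K).symm
    _ = -trace (S * K) := by rw [hS.eq, hK, Matrix.mul_neg, trace_neg]

theorem frobInner_comm (A B : M3) : frobInner A B = frobInner B A := by
  rw [frobInner, frobInner, ← trace_transpose, transpose_mul, transpose_transpose]

theorem frobInner_add_left (A B C : M3) :
    frobInner (A + B) C = frobInner A C + frobInner B C := by
  simp only [frobInner, transpose_add, Matrix.add_mul, trace_add]

theorem frobInner_add_right (A B C : M3) :
    frobInner A (B + C) = frobInner A B + frobInner A C := by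
  simp only [frobInner, Matrix.mul_add, trace_add]

theorem frobInner_smul_left (c : ℝ) (A B : M3) : frobInner (c • A) B = c * frobInner A B := by
  simp only [frobInner, transpose_smul, Matrix.smul_mul, trace_smul, smul_eq_mul]

theorem frobInner_one_left (A : M3) : frobInner 1 A = trace A := by
  rw [frobInner, transpose_one, Matrix.one_mul]

theorem symPart_add_skwPart (A : M3) : symPart A + skwPart A = A := by
  rw [symPart, skwPart]
  module

theorem isSymm_symPart (A : M3) : (symPart A).IsSymm := by
  rw [IsSymm, symPart, transpose_smul, transpose_add, transpose_transpose, add_comm]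

theorem transpose_skwPart (A : M3) : (skwPart A)ᵀ = -skwPart A := by
  rw [skwPart, transpose_smul, transpose_sub, transpose_transpose, ← smul_neg, neg_sub]

theorem frobInner_symPart_skwPart (A B : M3) : frobInner (symPart A) (skwPart B) = 0 := by
  rw [frobInner, (isSymm_symPart A).eq]
  exact trace_mul_eq_zero_of_isSymm_of_transpose_eq_neg (isSymm_symPart A) (transpose_skwPart B)

theorem frobInner_symPart_left (A B : M3) :
    frobInner (symPart A) B = frobInner (symPart A) (symPart B) := by
  conv_lhs => rw [← symPart_add_skwPart B]
  rw [frobInner_add_right, frobInner_symPart_skwPart, add_zero]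

theorem frobInner_skwPart_left (A B : M3) :
    frobInner (skwPart A) B = frobInner (skwPart A) (skwPart B) := by
  conv_lhs => rw [← symPart_add_skwPart B]
  rw [frobInner_add_right, frobInner_comm, frobInner_symPart_skwPart, zero_add]

theorem frobInner_C1_left (μ lam μc : ℝ) (A B : M3) :
    frobInner (C1 μ lam μc A) B = 2 * μ * frobInner (symPart A) (symPart B) +
      lam * trace A * trace B + μc * frobInner (skwPart A) (skwPart B) := by
  rw [C1, frobInner_add_left, frobInner_add_left, frobInner_smul_left, frobInner_smul_left,
    frobInner_smul_left, frobInner_one_left, frobInner_symPart_left, frobInner_skwPart_left]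

theorem C2mat_eq_C1 (α β γ : ℝ) (A : M3) : C2mat α β γ A = C1 ((γ + β) / 2) α (γ - β) A := by
  rw [C2mat, C1, mul_div_cancel₀ (γ + β) two_ne_zero]

theorem dot3_smul_smul (c : ℝ) (u v : V3) : dot3 (c • u) (c • v) = c ^ 2 * dot3 u v := by
  change (c • u) ⬝ᵥ (c • v) = c ^ 2 * (u ⬝ᵥ v)
  rw [smul_dotProduct, dotProduct_smul, smul_smul, smul_eq_mul, sq]

theorem transpose_mskw (u : V3) : (mskw u)ᵀ = -mskw u := by
  ext i j
  fin_cases i <;> fin_cases j <;> simp [mskw]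

theorem trace_mskw (u : V3) : trace (mskw u) = 0 := by
  simp [mskw, trace_fin_three]

theorem mskw_vskw (A : M3) : mskw (vskw A) = skwPart A := by
  ext i j
  fin_cases i <;> fin_cases j <;> simp [mskw, vskw, skwPart, div_eq_inv_mul, ← mul_neg]

theorem vskw_mskw (u : V3) : vskw (mskw u) = u := by
  ext i
  fin_cases i <;> simp [mskw, vskw]

theorem vskw_sub (A B : M3) : vskw (A - B) = vskw A - vskw B := by
  ext i
  fin_cases i <;> simp [vskw, sub_div, sub_sub_sub_comm]

theorem frobInner_mskw_mskw (u v : V3) : frobInner (mskw u) (mskw v) = 2 * dot3 u v := by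
  simp only [frobInner, mskw, dot3, trace_fin_three, mul_apply, transpose_apply, of_apply,
    Fin.sum_univ_three, cons_val', cons_val_fin_one, cons_val_zero, cons_val_one, cons_val]
  ring

theorem frobInner_skwPart_skwPart (A B : M3) :
    frobInner (skwPart A) (skwPart B) = 2 * dot3 (vskw A) (vskw B) := by
  rw [← mskw_vskw, ← mskw_vskw, frobInner_mskw_mskw]

theorem half_mul_frobInner_C1_self (μ lam μc : ℝ) (A : M3) :
    (1 / 2) * frobInner (C1 μ lam μc A) A = μ * frobInner (symPart A) (symPart A) +
      (lam / 2) * trace A ^ 2 + μc * dot3 (vskw A) (vskw A) := by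
  rw [frobInner_C1_left, frobInner_skwPart_skwPart]
  ring

theorem symPart_sub_mskw (A : M3) (u : V3) : symPart (A - mskw u) = symPart A := by
  rw [symPart, symPart, transpose_sub, transpose_mskw]
  module

theorem trace_sub_mskw (A : M3) (u : V3) : trace (A - mskw u) = trace A := by
  rw [trace_sub, trace_mskw, sub_zero]

theorem vskw_sub_mskw (A : M3) (u : V3) : vskw (A - mskw u) = vskw A - u := by
  rw [vskw_sub, vskw_mskw]

theorem trace_vgrad (v : V3 → V3) (x : V3) : trace (vgrad v x) = vdiv v x :=
  trace_fin_three _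

theorem vskw_vgrad (v : V3 → V3) (x : V3) : vskw (vgrad v x) = (1 / 2 : ℝ) • vcurl v x := by
  ext i
  fin_cases i <;> simp [vskw, vgrad, vcurl, div_eq_inv_mul]

/-- Splitting of the full Cosserat energy integrand. -/
theorem stmt5 (Ω : Set V3) (hΩ : IsOpen Ω) (μ lam μc α β γ : ℝ)
    (u ω : V3 → V3) (hu : DifferentiableOn ℝ u Ω)
    (hω : DifferentiableOn ℝ ω Ω) :
    ∀ x ∈ Ω,
      (1/2) * frobInner (C1 μ lam μc (vgrad u x - mskw (ω x)))
          (vgrad u x - mskw (ω x)) +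
      (1/2) * frobInner (C2mat α β γ (vgrad ω x)) (vgrad ω x) =
        μ * frobInner (symPart (vgrad u x)) (symPart (vgrad u x)) +
        (lam/2) * (vdiv u x)^2 +
        μc * dot3 ((1/2 : ℝ) • vcurl u x - ω x) ((1/2 : ℝ) • vcurl u x - ω x) +
        ((γ+β)/2) * frobInner (symPart (vgrad ω x)) (symPart (vgrad ω x)) +
        ((γ-β)/4) * dot3 (vcurl ω x) (vcurl ω x) +
        (α/2) * (vdiv ω x)^2 := by
  intro x _
  rw [C2mat_eq_C1, half_mul_frobInner_C1_self, half_mul_frobInner_C1_self, symPart_sub_mskw,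
    trace_sub_mskw, vskw_sub_mskw, trace_vgrad, trace_vgrad, vskw_vgrad, vskw_vgrad,
    dot3_smul_smul]
  ring
end
end

section
/- Let Ω ⊆ ℝ³ be open and τ : ℝ³ → ℝ^{3×3} a differentiable matrix field on Ω. Then at every point of Ω, div(𝒮 τ) = 2 vskw(curl τ), where 𝒮(A) = Aᵀ − (tr A)I and curl and div act row-wise on matrix fields; that is, the algebraic map 𝒮 anticommutes (in this precise sense) with the exterior derivatives curl and div of the vector-valued de Rham complex. -/
open Matrix

noncomputable section

/-- The gradient of a scalar field, as the vector of its partial derivatives `pd`; it expresses the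
divergence of the isotropic field `f • 1`. -/
def sgrad (f : V3 → ℝ) (x : V3) : V3 :=
  fun i => pd i f x

theorem vdiv_eq_sum (v : V3 → V3) (x : V3) : vdiv v x = ∑ j, pd j (fun y => v y j) x :=
  (Fin.sum_univ_three fun j => pd j (fun y => v y j) x).symm

theorem pd_sub (j : Fin 3) {f g : V3 → ℝ} {x : V3} (hf : DifferentiableAt ℝ f x)
    (hg : DifferentiableAt ℝ g x) : pd j (fun y => f y - g y) x = pd j f x - pd j g x := by
  simp only [pd, fderiv_fun_sub hf hg, _root_.sub_apply]

theorem pd_sum {ι : Type*} (s : Finset ι) (j : Fin 3) {f : ι → V3 → ℝ} {x : V3}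
    (hf : ∀ i ∈ s, DifferentiableAt ℝ (f i) x) :
    pd j (fun y => ∑ i ∈ s, f i y) x = ∑ i ∈ s, pd j (f i) x := by
  simp only [pd, fderiv_fun_sum hf, _root_.sum_apply]

theorem sgrad_trace {M : V3 → M3} {x : V3} (hM : ∀ i, DifferentiableAt ℝ (fun y => M y i i) x) :
    sgrad (fun y => (M y).trace) x = ∑ i, sgrad (fun y => M y i i) x := by
  ext k
  rw [Finset.sum_apply]
  exact pd_sum Finset.univ k fun i _ => hM i

theorem mdiv_sub {M N : V3 → M3} {x : V3} (hM : ∀ i j, DifferentiableAt ℝ (fun y => M y i j) x)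
    (hN : ∀ i j, DifferentiableAt ℝ (fun y => N y i j) x) :
    mdiv (fun y => M y - N y) x = mdiv M x - mdiv N x := by
  ext i
  simp only [mdiv, vdiv_eq_sum, Pi.sub_apply, Matrix.sub_apply, ← Finset.sum_sub_distrib]
  exact Finset.sum_congr rfl fun j _ => pd_sub j (hM i j) (hN i j)

theorem mdiv_smul_one (f : V3 → ℝ) (x : V3) :
    mdiv (fun y => f y • (1 : M3)) x = sgrad f x := by
  ext i
  have pd_entry (j : Fin 3) :
      pd j (fun y => (f y • (1 : M3)) i j) x = if i = j then pd j f x else 0 := by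
    split_ifs with h <;> simp [pd, h]
  simp only [mdiv, vdiv_eq_sum, pd_entry, Finset.sum_ite_eq, Finset.mem_univ, if_true, sgrad]

/- In index notation `2 (vskw (curl M))ᵢ = εᵢⱼₖ εⱼₗₘ ∂ₗ Mₖₘ`, and the contraction
`εᵢⱼₖ εⱼₗₘ = δₖₗ δᵢₘ - δₖₘ δᵢₗ` leaves `∂ₖ Mₖᵢ - ∂ᵢ Mₖₖ`. -/
theorem two_smul_vskw_mcurl (M : V3 → M3) (x : V3) :
    (2 : ℝ) • vskw (mcurl M x) =
      mdiv (fun y => (M y)ᵀ) x - ∑ k, sgrad (fun y => M y k k) x := by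
  ext i
  simp only [mdiv, vdiv, sgrad, Fin.sum_univ_three, transpose_apply, Pi.smul_apply, Pi.sub_apply,
    Pi.add_apply, smul_eq_mul]
  fin_cases i <;>
    simp only [vskw, mcurl, vcurl, of_apply, cons_val, Fin.zero_eta, Fin.mk_one,
      Fin.reduceFinMk] <;>
    ring

theorem stmt7_general {τ : V3 → M3} {x : V3}
    (hτ : ∀ i j, DifferentiableAt ℝ (fun y => τ y i j) x) :
    mdiv (fun y => Sop (τ y)) x = (2 : ℝ) • vskw (mcurl τ x) := by
  have trace_differentiable : DifferentiableAt ℝ (fun y => (τ y).trace) x :=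
    DifferentiableAt.fun_sum fun i _ => hτ i i
  calc mdiv (fun y => Sop (τ y)) x
      = mdiv (fun y => (τ y)ᵀ) x - mdiv (fun y => (τ y).trace • (1 : M3)) x :=
        mdiv_sub (fun i j => hτ j i) fun i j => trace_differentiable.mul_const ((1 : M3) i j)
    _ = mdiv (fun y => (τ y)ᵀ) x - ∑ k, sgrad (fun y => τ y k k) x := by
        rw [mdiv_smul_one, sgrad_trace fun k => hτ k k]
    _ = (2 : ℝ) • vskw (mcurl τ x) := (two_smul_vskw_mcurl τ x).symm

/-- div(𝒮 τ) = 2 vskw(curl τ) for a differentiable matrix field τ. -/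
theorem stmt7 (Ω : Set V3) (hΩ : IsOpen Ω) (τ : V3 → M3)
    (hτ : ∀ i j, DifferentiableOn ℝ (fun y => τ y i j) Ω) :
    ∀ x ∈ Ω, mdiv (fun y => Sop (τ y)) x = (2 : ℝ) • vskw (mcurl τ x) :=
  fun _ hx => stmt7_general fun i j => (hτ i j).differentiableAt (hΩ.mem_nhds hx)
end
end

section
/- Let μ, λ, μ_c ∈ ℝ. The quadratic form A ↦ ⟨C₁(A), A⟩ on 3×3 real matrices is positive definite (i.e. ⟨C₁(A), A⟩ > 0 for all A ≠ 0) if and only if μ > 0, 3λ + 2μ > 0, and μ_c > 0. -/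
open Matrix

noncomputable section

/-!
On 3×3 matrices, C₁ acts as multiplication by 2μ on symmetric trace-free matrices, by 3λ + 2μ on
multiples of the identity and by μ_c on skew-symmetric matrices. These three eigenspaces are
nonzero, pairwise orthogonal and span the whole space, so the form is positive definite exactly
when all three eigenvalues are positive. In dimension n the number 3 becomes n, and n ≥ 2 is what
makes the eigenspaces nonzero.
-/

section Bilinear

variable {R V : Type*} [CommSemiring R] [AddCommMonoid V] [Module R V]

theorem bilinForm_smul_add_smul_add_smul_of_orthogonal {B : LinearMap.BilinForm R V}
    (hB : B.IsRefl) {x y z : V} (hxy : B x y = 0) (hxz : B x z = 0) (hyz : B y z = 0)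
    (a b c : R) :
    B (a • x + b • y + c • z) (x + y + z) = a * B x x + b * B y y + c * B z z := by
  have hyx := hB x y hxy
  have hzx := hB x z hxz
  have hzy := hB y z hyz
  simp only [map_add, map_smul, LinearMap.add_apply, LinearMap.smul_apply, smul_eq_mul,
    hxy, hxz, hyz, hyx, hzx, hzy, mul_zero, add_zero, zero_add]

end Bilinear

section FrobeniusForm

variable {R m n : Type*} [CommSemiring R] [Fintype m] [Fintype n]

/-- The Frobenius inner product `tr (Aᵀ B)` of rectangular matrices, as a bilinear form over any
commutative semiring. -/
def frobeniusForm : LinearMap.BilinForm R (Matrix m n R) :=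
  LinearMap.mk₂ R (fun A B => trace (Aᵀ * B))
    (fun A A' B => by rw [transpose_add, Matrix.add_mul, trace_add])
    (fun c A B => by rw [transpose_smul, smul_mul, trace_smul])
    (fun A B B' => by rw [Matrix.mul_add, trace_add])
    (fun c A B => by rw [Matrix.mul_smul, trace_smul])

theorem frobeniusForm_apply (A B : Matrix m n R) : frobeniusForm A B = trace (Aᵀ * B) := rfl

theorem frobeniusForm_eq_vec_dotProduct_vec (A B : Matrix m n R) :
    frobeniusForm A B = vec A ⬝ᵥ vec B :=
  (vec_dotProduct_vec A B).symm

theorem frobeniusForm_isSymm : (frobeniusForm : LinearMap.BilinForm R (Matrix m n R)).IsSymm where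
  eq A B := by simp only [frobeniusForm_eq_vec_dotProduct_vec, dotProduct_comm]

theorem frobeniusForm_one_right [DecidableEq n] (A : Matrix n n R) :
    frobeniusForm A 1 = trace A := by
  rw [frobeniusForm_apply, Matrix.mul_one, trace_transpose]

end FrobeniusForm

section Positivity

variable {K m n : Type*} [CommRing K] [LinearOrder K] [IsStrictOrderedRing K]
  [Fintype m] [Fintype n]

theorem frobeniusForm_self_pos {A : Matrix m n K} (hA : A ≠ 0) : 0 < frobeniusForm A A := by
  have hvec : vec A ≠ 0 := vec_eq_zero_iff.not.mpr hA
  rw [frobeniusForm_eq_vec_dotProduct_vec]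
  exact (Finset.sum_nonneg fun i _ => mul_self_nonneg (vec A i)).lt_of_ne'
    (dotProduct_self_eq_zero.not.mpr hvec)

theorem frobeniusForm_self_nonneg (A : Matrix m n K) : 0 ≤ frobeniusForm A A := by
  obtain rfl | hA := eq_or_ne A 0
  · rw [map_zero]
  · exact (frobeniusForm_self_pos hA).le

theorem eigenvalue_pos_of_frobeniusForm_pos {T : Matrix m n K → Matrix m n K}
    (hT : ∀ A, A ≠ 0 → 0 < frobeniusForm (T A) A) {A : Matrix m n K} (hA : A ≠ 0) {c : K}
    (hc : T A = c • A) : 0 < c := by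
  have h_pos := hT A hA
  rw [hc, map_smul, LinearMap.smul_apply, smul_eq_mul] at h_pos
  exact pos_of_mul_pos_left h_pos (frobeniusForm_self_nonneg A)

end Positivity

section Decomposition

variable {K n : Type*} [Field K]

/-- The symmetric part `½ (A + Aᵀ)` of a square matrix of any size. -/
def symmetricPart (A : Matrix n n K) : Matrix n n K := (1 / 2 : K) • (A + Aᵀ)

/-- The skew-symmetric part `½ (A - Aᵀ)` of a square matrix of any size. -/
def skewPart (A : Matrix n n K) : Matrix n n K := (1 / 2 : K) • (A - Aᵀ)

theorem isSymm_symmetricPart (A : Matrix n n K) : (symmetricPart A).IsSymm :=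
  (isSymm_add_transpose_self A).smul _

theorem transpose_skewPart (A : Matrix n n K) : (skewPart A)ᵀ = -skewPart A := by
  rw [skewPart, transpose_smul, transpose_sub, transpose_transpose, ← smul_neg, neg_sub]

theorem symmetricPart_eq_self [CharZero K] {A : Matrix n n K} (hA : A.IsSymm) :
    symmetricPart A = A := by
  rw [symmetricPart, hA.eq]
  module

theorem skewPart_eq_self [CharZero K] {A : Matrix n n K} (hA : Aᵀ = -A) : skewPart A = A := by
  rw [skewPart, hA]
  module

theorem symmetricPart_eq_zero {A : Matrix n n K} (hA : Aᵀ = -A) : symmetricPart A = 0 := by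
  rw [symmetricPart, hA, add_neg_cancel, smul_zero]

theorem skewPart_eq_zero {A : Matrix n n K} (hA : A.IsSymm) : skewPart A = 0 := by
  rw [skewPart, hA.eq, sub_self, smul_zero]

theorem symmetricPart_add_skewPart [CharZero K] (A : Matrix n n K) :
    symmetricPart A + skewPart A = A := by
  rw [symmetricPart, skewPart]
  module

variable [Fintype n]

theorem trace_eq_zero_of_transpose_eq_neg [CharZero K] {A : Matrix n n K} (hA : Aᵀ = -A) :
    trace A = 0 :=
  self_eq_neg.mp <| calc
    trace A = trace Aᵀ := (trace_transpose A).symm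
    _ = -trace A := by rw [hA, trace_neg]

theorem trace_symmetricPart [CharZero K] (A : Matrix n n K) :
    trace (symmetricPart A) = trace A := by
  rw [symmetricPart, trace_smul, trace_add, trace_transpose, smul_eq_mul]
  ring

theorem frobeniusForm_eq_zero_of_isSymm_of_transpose_eq_neg [CharZero K] {A B : Matrix n n K}
    (hA : A.IsSymm) (hB : Bᵀ = -B) : frobeniusForm A B = 0 :=
  self_eq_neg.mp <| calc
    frobeniusForm A B = trace (A * B) := by rw [frobeniusForm_apply, hA.eq]
    _ = trace (-(B * A)) := by
      rw [← trace_transpose, transpose_mul, hA.eq, hB, Matrix.neg_mul]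
    _ = -frobeniusForm A B := by rw [trace_neg, trace_mul_comm, frobeniusForm_apply, hA.eq]

variable [DecidableEq n]

/-- The spherical part `(tr A / n) I` of a matrix, its orthogonal projection onto the multiples of
the identity. -/
def sphericalPart (A : Matrix n n K) : Matrix n n K := (trace A / Fintype.card n) • 1

/-- The deviator `dev sym A` of the symmetric part: the symmetric trace-free component of `A`. -/
def deviatoricPart (A : Matrix n n K) : Matrix n n K := symmetricPart A - sphericalPart A

theorem isSymm_sphericalPart (A : Matrix n n K) : (sphericalPart A).IsSymm :=
  isSymm_one.smul _

theorem isSymm_deviatoricPart (A : Matrix n n K) : (deviatoricPart A).IsSymm :=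
  (isSymm_symmetricPart A).sub (isSymm_sphericalPart A)

theorem deviatoricPart_add_sphericalPart_add_skewPart [CharZero K] (A : Matrix n n K) :
    deviatoricPart A + sphericalPart A + skewPart A = A := by
  rw [deviatoricPart, sub_add_cancel, symmetricPart_add_skewPart]

theorem card_smul_sphericalPart [CharZero K] [Nonempty n] (A : Matrix n n K) :
    (Fintype.card n : K) • sphericalPart A = trace A • 1 := by
  rw [sphericalPart, smul_smul, mul_div_cancel₀ _ (Nat.cast_ne_zero.mpr Fintype.card_ne_zero)]

theorem trace_sphericalPart [CharZero K] [Nonempty n] (A : Matrix n n K) :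
    trace (sphericalPart A) = trace A := by
  rw [sphericalPart, trace_smul, trace_one, smul_eq_mul,
    div_mul_cancel₀ _ (Nat.cast_ne_zero.mpr Fintype.card_ne_zero)]

theorem trace_deviatoricPart [CharZero K] [Nonempty n] (A : Matrix n n K) :
    trace (deviatoricPart A) = 0 := by
  rw [deviatoricPart, trace_sub, trace_symmetricPart, trace_sphericalPart, sub_self]

theorem frobeniusForm_deviatoricPart_sphericalPart [CharZero K] [Nonempty n]
    (A : Matrix n n K) : frobeniusForm (deviatoricPart A) (sphericalPart A) = 0 := by
  rw [sphericalPart, map_smul, frobeniusForm_one_right, trace_deviatoricPart, smul_zero]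

theorem frobeniusForm_smul_parts_self [CharZero K] [Nonempty n] (a b c : K) (A : Matrix n n K) :
    frobeniusForm (a • deviatoricPart A + b • sphericalPart A + c • skewPart A) A =
      a * frobeniusForm (deviatoricPart A) (deviatoricPart A) +
        b * frobeniusForm (sphericalPart A) (sphericalPart A) +
        c * frobeniusForm (skewPart A) (skewPart A) := by
  have h_pythagoras := bilinForm_smul_add_smul_add_smul_of_orthogonal
    frobeniusForm_isSymm.isRefl
    (frobeniusForm_deviatoricPart_sphericalPart A)
    (frobeniusForm_eq_zero_of_isSymm_of_transpose_eq_neg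
      (isSymm_deviatoricPart A) (transpose_skewPart A))
    (frobeniusForm_eq_zero_of_isSymm_of_transpose_eq_neg
      (isSymm_sphericalPart A) (transpose_skewPart A)) a b c
  rwa [deviatoricPart_add_sphericalPart_add_skewPart] at h_pythagoras

theorem frobeniusForm_self_eq_add_parts [CharZero K] [Nonempty n] (A : Matrix n n K) :
    frobeniusForm A A =
      frobeniusForm (deviatoricPart A) (deviatoricPart A) +
        frobeniusForm (sphericalPart A) (sphericalPart A) +
        frobeniusForm (skewPart A) (skewPart A) := by
  simpa only [one_smul, one_mul, deviatoricPart_add_sphericalPart_add_skewPart] using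
    frobeniusForm_smul_parts_self 1 1 1 A

end Decomposition

section Existence

variable {R n : Type*} [Ring R] [Nontrivial R] [Nontrivial n]

theorem exists_ne_zero_isSymm_trace_eq_zero [Fintype n] :
    ∃ A : Matrix n n R, A ≠ 0 ∧ A.IsSymm ∧ trace A = 0 := by
  classical
  obtain ⟨i, j, hij⟩ := exists_pair_ne n
  refine ⟨single i j 1 + single j i 1, fun h => ?_, ?_, ?_⟩
  · simpa [hij] using congr_fun₂ h i j
  · rw [IsSymm, transpose_add, transpose_single, transpose_single, add_comm]
  · rw [trace_add, trace_single_eq_of_ne _ _ _ hij, trace_single_eq_of_ne _ _ _ hij.symm, add_zero]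

theorem exists_ne_zero_transpose_eq_neg : ∃ A : Matrix n n R, A ≠ 0 ∧ Aᵀ = -A := by
  classical
  obtain ⟨i, j, hij⟩ := exists_pair_ne n
  refine ⟨single i j 1 - single j i 1, fun h => ?_, ?_⟩
  · simpa [hij] using congr_fun₂ h i j
  · rw [transpose_sub, transpose_single, transpose_single, neg_sub]

end Existence

section IsotropicLaw

variable {K n : Type*} [Field K] [Fintype n] [DecidableEq n]

/-- The Cosserat material law `2μ sym A + λ (tr A) I + μ_c skw A` in arbitrary dimension. -/
def isotropicLaw (μ lam μc : K) (A : Matrix n n K) : Matrix n n K :=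
  (2 * μ) • symmetricPart A + (lam * trace A) • 1 + μc • skewPart A

theorem isotropicLaw_of_isSymm_of_trace_eq_zero [CharZero K] (μ lam μc : K) {A : Matrix n n K}
    (hA : A.IsSymm) (htr : trace A = 0) : isotropicLaw μ lam μc A = (2 * μ) • A := by
  rw [isotropicLaw, symmetricPart_eq_self hA, skewPart_eq_zero hA, htr]
  module

theorem isotropicLaw_one [CharZero K] (μ lam μc : K) :
    isotropicLaw μ lam μc (1 : Matrix n n K) = (Fintype.card n * lam + 2 * μ) • 1 := by
  rw [isotropicLaw, symmetricPart_eq_self isSymm_one, skewPart_eq_zero isSymm_one, trace_one]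
  module

theorem isotropicLaw_of_transpose_eq_neg [CharZero K] (μ lam μc : K) {A : Matrix n n K}
    (hA : Aᵀ = -A) : isotropicLaw μ lam μc A = μc • A := by
  rw [isotropicLaw, symmetricPart_eq_zero hA, skewPart_eq_self hA,
    trace_eq_zero_of_transpose_eq_neg hA]
  module

theorem isotropicLaw_eq_smul_parts [CharZero K] [Nonempty n] (μ lam μc : K) (A : Matrix n n K) :
    isotropicLaw μ lam μc A =
      (2 * μ) • deviatoricPart A + (Fintype.card n * lam + 2 * μ) • sphericalPart A +
        μc • skewPart A := by
  rw [isotropicLaw, mul_smul lam, ← card_smul_sphericalPart, deviatoricPart]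
  module

end IsotropicLaw

section PositiveDefinite

variable {K n : Type*} [Field K] [LinearOrder K] [IsStrictOrderedRing K]
  [Fintype n] [DecidableEq n]

theorem mul_frobeniusForm_self_le_frobeniusForm_isotropicLaw [Nonempty n] {c μ lam μc : K}
    (h_dev : c ≤ 2 * μ) (h_sph : c ≤ Fintype.card n * lam + 2 * μ) (h_skew : c ≤ μc)
    (A : Matrix n n K) :
    c * frobeniusForm A A ≤ frobeniusForm (isotropicLaw μ lam μc A) A := by
  rw [isotropicLaw_eq_smul_parts, frobeniusForm_smul_parts_self,
    frobeniusForm_self_eq_add_parts, mul_add, mul_add]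
  gcongr <;> exact frobeniusForm_self_nonneg _

theorem stmt12_general [Nontrivial n] (μ lam μc : K) :
    (∀ A : Matrix n n K, A ≠ 0 → 0 < frobeniusForm (isotropicLaw μ lam μc A) A) ↔
      (0 < μ ∧ 0 < Fintype.card n * lam + 2 * μ ∧ 0 < μc) := by
  constructor
  · intro h
    obtain ⟨D, hD, hD_symm, hD_trace⟩ := exists_ne_zero_isSymm_trace_eq_zero (R := K) (n := n)
    obtain ⟨W, hW, hW_skew⟩ := exists_ne_zero_transpose_eq_neg (R := K) (n := n)
    have h_two_mul : 0 < 2 * μ := eigenvalue_pos_of_frobeniusForm_pos h hD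
      (isotropicLaw_of_isSymm_of_trace_eq_zero μ lam μc hD_symm hD_trace)
    exact ⟨pos_of_mul_pos_right h_two_mul zero_le_two,
      eigenvalue_pos_of_frobeniusForm_pos h one_ne_zero (isotropicLaw_one μ lam μc),
      eigenvalue_pos_of_frobeniusForm_pos h hW (isotropicLaw_of_transpose_eq_neg μ lam μc hW_skew)⟩
  · rintro ⟨hμ, h_sph, hμc⟩ A hA
    obtain ⟨c, hc, hc_dev, hc_sph, hc_skew⟩ :
        ∃ c, 0 < c ∧ c ≤ 2 * μ ∧ c ≤ Fintype.card n * lam + 2 * μ ∧ c ≤ μc :=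
      ⟨min (2 * μ) (min (Fintype.card n * lam + 2 * μ) μc), by positivity, by simp⟩
    exact (mul_pos hc (frobeniusForm_self_pos hA)).trans_le
      (mul_frobeniusForm_self_le_frobeniusForm_isotropicLaw hc_dev hc_sph hc_skew A)

end PositiveDefinite

/-- The quadratic form A ↦ ⟨C₁(A),A⟩ is positive definite
iff μ > 0, 3λ + 2μ > 0, and μ_c > 0. -/
theorem stmt12 (μ lam μc : ℝ) :
    (∀ A : M3, A ≠ 0 → 0 < frobInner (C1 μ lam μc A) A) ↔
      (0 < μ ∧ 0 < 3*lam + 2*μ ∧ 0 < μc) := by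
  have h := stmt12_general (n := Fin 3) μ lam μc
  rwa [Fintype.card_fin, Nat.cast_ofNat] at h
end
end
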